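/- Fix an integer n ≥ 2, and let W = x² + xyⁿ + y^{2n} and V = x² + xyⁿ in ℂ[x,y]. For every nonzero c ∈ ℂ, the assignment y ↦ c·[y] (together with x ↦ the class determined by the relation 2x + yⁿ = 0, i.e. x ↦ −cⁿ[yⁿ]/2) induces a well-defined isomorphism of graded ℂ-algebras φ_c : Q_W → Q_V, both Milnor rings having weights (1/2, 1/(2n)) and monomial basis {1, y, y², …, y^{2n−2}}. Moreover, there exists a nonzero c ∈ ℂ for which φ_c also preserves the pairings. -/

import Mathlib

open MvPolynomial
open scoped TensorProduct

noncomputable section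

namespace LG

variable {σ : Type*} [Fintype σ] [DecidableEq σ]

/-- The Jacobian ideal of a polynomial `W`, generated by its partial derivatives. -/
def jacobianIdeal (W : MvPolynomial σ ℂ) : Ideal (MvPolynomial σ ℂ) :=
  Ideal.span (Set.range fun i => pderiv i W)

/-- The Milnor ring (local algebra) `Q_W = ℂ[x]/(∂W/∂x₁,…,∂W/∂xₙ)`. -/
abbrev MilnorRing (W : MvPolynomial σ ℂ) :=
  MvPolynomial σ ℂ ⧸ jacobianIdeal W

/-- The canonical projection onto the Milnor ring. -/
def mkQ (W : MvPolynomial σ ℂ) : MvPolynomial σ ℂ →ₐ[ℂ] MilnorRing W :=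
  Ideal.Quotient.mkₐ ℂ (jacobianIdeal W)

/-- `W` is quasihomogeneous with (positive rational) weights `q`:
every monomial `x^a` occurring in `W` satisfies `∑ i, a i * q i = 1`. -/
def IsQuasiHomogeneous (W : MvPolynomial σ ℂ) (q : σ → ℚ) : Prop :=
  (∀ i, 0 < q i) ∧ ∀ a ∈ W.support, ∑ i, (a i : ℚ) * q i = 1

/-- `W` is nondegenerate: the origin is the only common zero of its partial
derivatives. -/
def Nondegenerate (W : MvPolynomial σ ℂ) : Prop :=
  ∀ x : σ → ℂ, (∀ i, eval x (pderiv i W) = 0) → x = 0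

/-- `W` is admissible with weights `q`: nondegenerate, quasihomogeneous with
uniquely determined weights, and without cross-term monomials `xᵢxⱼ` (`i ≠ j`). -/
def Admissible (W : MvPolynomial σ ℂ) (q : σ → ℚ) : Prop :=
  Nondegenerate W ∧ IsQuasiHomogeneous W q ∧
    (∀ q', IsQuasiHomogeneous W q' → q' = q) ∧
    ∀ a ∈ W.support, ∀ i j, i ≠ j → a ≠ Finsupp.single i 1 + Finsupp.single j 1

/-- The Hessian of `W`: the determinant of the matrix of second partial
derivatives. -/
def hess (W : MvPolynomial σ ℂ) : MvPolynomial σ ℂ :=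
  Matrix.det (Matrix.of fun i j => pderiv i (pderiv j W))

/-- The homogeneous component of the Milnor ring of weighted degree `d`:
the image in `Q_W` of the span of the monomials of weighted degree `d`. -/
def gradedPiece (W : MvPolynomial σ ℂ) (q : σ → ℚ) (d : ℚ) :
    Submodule ℂ (MilnorRing W) :=
  (weightedHomogeneousSubmodule ℂ q d).map (mkQ W).toLinearMap

/-- The top weighted degree `∑ᵢ (1 - 2qᵢ)` of the Milnor ring. -/
def topDegree (q : σ → ℚ) : ℚ := ∑ i, (1 - 2 * q i)

/-- The part of the Milnor ring of weighted degree below the top degree. -/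
def belowTop (W : MvPolynomial σ ℂ) (q : σ → ℚ) : Submodule ℂ (MilnorRing W) :=
  ⨆ (d : ℚ) (_ : d < topDegree q), gradedPiece W q d

/-- `p` is the pairing of the Milnor ring of `W`: the top weighted-degree
homogeneous component of `a * b` equals `(p a b / μ) • [Hess W]`, i.e.
`a * b - (p a b / μ) • [Hess W]` lies in the part of degree `< topDegree q`. -/
def IsMilnorPairing (W : MvPolynomial σ ℂ) (q : σ → ℚ)
    (p : MilnorRing W → MilnorRing W → ℂ) : Prop :=
  ∀ a b : MilnorRing W,
    a * b - (p a b / (Module.finrank ℂ (MilnorRing W) : ℂ)) • mkQ W (hess W)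
      ∈ belowTop W q

/-- The rescaling substitution `xᵢ ↦ ζᵢ · xᵢ`. -/
def scaleVars (ζ : σ → ℂ) : MvPolynomial σ ℂ →ₐ[ℂ] MvPolynomial σ ℂ :=
  aeval fun i => C (ζ i) * X i

/-- `φ : Q_W → Q_V` is equivariant for the diagonal symmetry `ζ`, expressed on
representatives: the action of `ζ` sends the class of `p` to
`det ζ • [p ∘ ζ]`, and `φ` intertwines the two actions. -/
def EquivariantAt (W V : MvPolynomial σ ℂ)
    (φ : MilnorRing W → MilnorRing V) (ζ : σ → ℂ) : Prop :=
  ∀ p r : MvPolynomial σ ℂ, φ (mkQ W p) = mkQ V r →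
    φ ((∏ i, ζ i) • mkQ W (scaleVars ζ p)) = (∏ i, ζ i) • mkQ V (scaleVars ζ r)

/-- `φ : Q_W → Q_V` preserves the weighted grading. -/
def PreservesGrading {σ τ : Type*} [Fintype σ] [DecidableEq σ]
    [Fintype τ] [DecidableEq τ]
    {W : MvPolynomial σ ℂ} {V : MvPolynomial τ ℂ}
    (φ : MilnorRing W → MilnorRing V) (qW : σ → ℚ) (qV : τ → ℚ) : Prop :=
  ∀ d : ℚ, ∀ a ∈ gradedPiece W qW d, φ a ∈ gradedPiece V qV d

/-- `φ : Q_W → Q_V` preserves the pairings: `⟨a,b⟩_{Q_W} = ⟨φ a, φ b⟩_{Q_V}`. -/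
def PreservesPairings {σ τ : Type*} [Fintype σ] [DecidableEq σ]
    [Fintype τ] [DecidableEq τ]
    {W : MvPolynomial σ ℂ} {V : MvPolynomial τ ℂ}
    (φ : MilnorRing W → MilnorRing V) (qW : σ → ℚ) (qV : τ → ℚ) : Prop :=
  ∀ pW pV, IsMilnorPairing W qW pW → IsMilnorPairing V qV pV →
    ∀ a b, pW a b = pV (φ a) (φ b)

end LG

open LG

/-- `W = x² + xyⁿ + y^{2n}`. -/
def W8 (n : ℕ) : MvPolynomial (Fin 2) ℂ := X 0 ^ 2 + X 0 * X 1 ^ n + X 1 ^ (2 * n)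

/-- `V = x² + xyⁿ`. -/
def V8 (n : ℕ) : MvPolynomial (Fin 2) ℂ := X 0 ^ 2 + X 0 * X 1 ^ n

/-- the common weights `(1/2, 1/(2n))`. -/
def q8 (n : ℕ) : Fin 2 → ℚ := ![1 / 2, 1 / (2 * (n : ℚ))]

/-!
In the family `x² + xyⁿ + ε y^{2n}`, the relation `2x + yⁿ = 0` eliminates `x = -yⁿ/2`, and the
derivative in `y` becomes `(n/2) (4ε - 1) y^{2n-1}`. Hence for `4ε ≠ 1` the Milnor ring is the
truncated polynomial ring `ℂ[y]/(y^{2n-1})`, on which `y ↦ c y` is an automorphism for every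
`c ≠ 0`. A graded isomorphism preserves the pairings as soon as it matches the Hessian classes,
because the Hessian is homogeneous of the top degree. Its class is `n (2n - 1) (4ε - 1) [y^{2n-2}]`,
so between the members `ε` and `δ` of the family the condition on `c` reads
`c^{2n-2} (4ε - 1) = 4δ - 1`, which can be solved for `c` because `2n - 2 > 0`.
-/

namespace LG

lemma isWeightedHomogeneous_aeval {R σ τ M : Type*} [CommSemiring R] [AddCommMonoid M]
    {w : σ → M} {v : τ → M} {d : M} {p : MvPolynomial σ R} (hp : IsWeightedHomogeneous w p d)
    {r : σ → MvPolynomial τ R} (hr : ∀ i, IsWeightedHomogeneous v (r i) (w i)) :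
    IsWeightedHomogeneous v (aeval r p) d := by
  rw [aeval_def, eval₂_eq]
  refine IsWeightedHomogeneous.sum _ _ _ fun a ha => ?_
  have hprod : IsWeightedHomogeneous v (∏ i ∈ a.support, r i ^ a i) d := by
    rw [← hp (mem_support_iff.1 ha), Finsupp.weight_apply]
    exact IsWeightedHomogeneous.prod _ _ _ fun i _ => (hr i).pow (a i)
  exact hprod.C_mul _

section MilnorRing

variable {σ τ : Type*} {W : MvPolynomial σ ℂ} {V : MvPolynomial τ ℂ}

lemma mkQ_eq_zero_iff {p : MvPolynomial σ ℂ} : mkQ W p = 0 ↔ p ∈ jacobianIdeal W :=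
  Ideal.Quotient.eq_zero_iff_mem

lemma mkQ_pderiv (i : σ) : mkQ W (pderiv i W) = 0 :=
  mkQ_eq_zero_iff.2 (Ideal.subset_span ⟨i, rfl⟩)

lemma milnorRing_algHom_ext {A : Type*} [Semiring A] [Algebra ℂ A] {f g : MilnorRing W →ₐ[ℂ] A}
    (h : ∀ i, f (mkQ W (X i)) = g (mkQ W (X i))) : f = g :=
  Ideal.Quotient.algHom_ext ℂ (MvPolynomial.algHom_ext h)

/-- The universal property of the Milnor ring: a point of a `ℂ`-algebra `A` at which all partial
derivatives of `W` vanish defines an algebra homomorphism `Q_W → A`. -/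
def milnorRingLift {A : Type*} [CommRing A] [Algebra ℂ A] (a : σ → A)
    (ha : ∀ i, aeval a (pderiv i W) = 0) : MilnorRing W →ₐ[ℂ] A :=
  Ideal.Quotient.liftₐ (jacobianIdeal W) (aeval a) fun p hp => by
    have hle : jacobianIdeal W ≤ RingHom.ker (aeval a) :=
      Ideal.span_le.2 (Set.range_subset_iff.2 ha)
    exact hle hp

@[simp]
lemma milnorRingLift_mkQ {A : Type*} [CommRing A] [Algebra ℂ A] (a : σ → A)
    (ha : ∀ i, aeval a (pderiv i W) = 0) (p : MvPolynomial σ ℂ) :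
    milnorRingLift a ha (mkQ W p) = aeval a p :=
  rfl

lemma mkQ_mem_gradedPiece {q : σ → ℚ} {d : ℚ} {p : MvPolynomial σ ℂ}
    (hp : IsWeightedHomogeneous q p d) : mkQ W p ∈ gradedPiece W q d :=
  Submodule.mem_map_of_mem hp

lemma preservesGrading_of_map_X_mem [Fintype σ] [DecidableEq σ] [Fintype τ] [DecidableEq τ]
    {qW : σ → ℚ} {qV : τ → ℚ} {φ : MilnorRing W →ₐ[ℂ] MilnorRing V}
    (hφ : ∀ i, φ (mkQ W (X i)) ∈ gradedPiece V qV (qW i)) : PreservesGrading φ qW qV := by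
  choose r hr hφr using hφ
  have hlift : φ.comp (mkQ W) = (mkQ V).comp (aeval r) :=
    MvPolynomial.algHom_ext fun i => by simpa using (hφr i).symm
  rintro d _ ⟨p, hp, rfl⟩
  have hφp : φ (mkQ W p) = mkQ V (aeval r p) := DFunLike.congr_fun hlift p
  exact hφp ▸ mkQ_mem_gradedPiece (isWeightedHomogeneous_aeval hp hr)

end MilnorRing

section Quasihomogeneous

variable {σ τ : Type*} {W : MvPolynomial σ ℂ} {V : MvPolynomial τ ℂ} {q : σ → ℚ}

attribute [local instance] MvPolynomial.weightedGradedAlgebra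

lemma jacobianIdeal_isHomogeneous (hW : IsWeightedHomogeneous q W 1) :
    (jacobianIdeal W).IsHomogeneous (weightedHomogeneousSubmodule ℂ q) := by
  refine Ideal.homogeneous_span _ _ ?_
  rintro _ ⟨i, rfl⟩
  exact ⟨1 - q i, hW.pderiv (sub_add_cancel 1 (q i))⟩

variable [Fintype σ]

lemma isQuasiHomogeneous_iff :
    IsQuasiHomogeneous W q ↔ (∀ i, 0 < q i) ∧ IsWeightedHomogeneous q W 1 := by
  simp [IsQuasiHomogeneous, IsWeightedHomogeneous, Finsupp.weight_apply, Finsupp.sum_fintype]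

lemma mkQ_notMem_belowTop (hW : IsWeightedHomogeneous q W 1) {p : MvPolynomial σ ℂ}
    (hp : IsWeightedHomogeneous q p (topDegree q)) (hp0 : mkQ W p ≠ 0) :
    mkQ W p ∉ belowTop W q := by
  intro hmem
  simp only [belowTop, gradedPiece, ← Submodule.map_iSup] at hmem
  obtain ⟨s, hs, hsp⟩ := hmem
  have hs0 : weightedHomogeneousComponent q (topDegree q) s = 0 := by
    have hle : (⨆ (d : ℚ) (_ : d < topDegree q), weightedHomogeneousSubmodule ℂ q d) ≤
        LinearMap.ker (weightedHomogeneousComponent q (topDegree q)) :=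
      iSup₂_le fun d hd r hr => hr.weightedHomogeneousComponent_ne _ hd.ne'
    exact hle hs
  have hdiff : p - s ∈ jacobianIdeal W := by
    rw [← mkQ_eq_zero_iff, map_sub, sub_eq_zero]
    exact hsp.symm
  have htop := weightedHomogeneousComponent_mem_of_mem ℂ q (jacobianIdeal_isHomogeneous hW) hdiff
    (topDegree q)
  rw [map_sub, hs0, sub_zero, hp.weightedHomogeneousComponent_same] at htop
  exact hp0 (mkQ_eq_zero_iff.2 htop)

variable [DecidableEq σ]

lemma isWeightedHomogeneous_hess (hW : IsWeightedHomogeneous q W 1) :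
    IsWeightedHomogeneous q (hess W) (topDegree q) := by
  rw [hess, Matrix.det_apply]
  refine IsWeightedHomogeneous.sum _ _ _ fun π _ => ?_
  have hentry (i : σ) : IsWeightedHomogeneous q (pderiv (π i) (pderiv i W)) (1 - q i - q (π i)) :=
    (hW.pderiv (sub_add_cancel 1 (q i))).pderiv (sub_add_cancel _ _)
  have hdegree : ∑ i, (1 - q i - q (π i)) = topDegree q := by
    simp only [topDegree, Finset.sum_sub_distrib, two_mul, Finset.sum_add_distrib,
      Equiv.sum_comp π q, sub_sub]
  rw [← mem_weightedHomogeneousSubmodule, Units.smul_def]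
  refine zsmul_mem ?_ _
  rw [mem_weightedHomogeneousSubmodule, ← hdegree]
  exact IsWeightedHomogeneous.prod _ _ _ fun i _ => hentry i

variable [Fintype τ] [DecidableEq τ]

lemma PreservesGrading.map_mem_belowTop {qW : σ → ℚ} {qV : τ → ℚ}
    {φ : MilnorRing W →ₐ[ℂ] MilnorRing V} (hφ : PreservesGrading φ qW qV)
    (htop : topDegree qW = topDegree qV) {a : MilnorRing W} (ha : a ∈ belowTop W qW) :
    φ a ∈ belowTop V qV := by
  have hle : belowTop W qW ≤ (belowTop V qV).comap φ.toLinearMap :=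
    iSup₂_le fun d hd b hb => Submodule.mem_iSup_of_mem d <|
      Submodule.mem_iSup_of_mem (htop ▸ hd) (hφ d b hb)
  exact hle ha

lemma preservesPairings_of_map_hess [Module.Finite ℂ (MilnorRing V)] {qW : σ → ℚ} {qV : τ → ℚ}
    {φ : MilnorRing W ≃ₐ[ℂ] MilnorRing V} (hφ : PreservesGrading φ qW qV)
    (htop : topDegree qW = topDegree qV) (hV : IsWeightedHomogeneous qV V 1)
    (hhess : φ (mkQ W (hess W)) = mkQ V (hess V)) (hhess0 : mkQ V (hess V) ≠ 0) :
    PreservesPairings φ qW qV := by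
  intro pW pV hpW hpV a b
  set μ : ℂ := (Module.finrank ℂ (MilnorRing V) : ℂ)
  have hμ : μ ≠ 0 := by
    have : Nontrivial (MilnorRing V) := nontrivial_of_ne _ _ hhess0
    exact Nat.cast_ne_zero.2 Module.finrank_pos.ne'
  have hWV : φ a * φ b - (pW a b / μ) • mkQ V (hess V) ∈ belowTop V qV := by
    have := PreservesGrading.map_mem_belowTop (φ := φ.toAlgHom) hφ htop (hpW a b)
    simpa [hhess, φ.toLinearEquiv.finrank_eq] using this
  have hdiff : ((pV (φ a) (φ b) - pW a b) / μ) • mkQ V (hess V) ∈ belowTop V qV := by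
    convert sub_mem hWV (hpV (φ a) (φ b)) using 1
    module
  by_contra hne
  refine mkQ_notMem_belowTop hV (isWeightedHomogeneous_hess hV) hhess0 ?_
  exact (Submodule.smul_mem_iff _ (div_ne_zero (sub_ne_zero.2 (Ne.symm hne)) hμ)).1 hdiff

end Quasihomogeneous

section TruncatedPolynomial

/-- The truncated polynomial ring `R[y]/(y^N)`, whose variable `y` is `AdjoinRoot.root`. -/
abbrev TruncatedPolynomial (R : Type*) [CommRing R] (N : ℕ) :=
  AdjoinRoot (Polynomial.X ^ N : Polynomial R)

variable {R : Type*} [CommRing R] {N : ℕ}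

lemma truncatedPolynomial_root_pow :
    (AdjoinRoot.root _ : TruncatedPolynomial R N) ^ N = 0 := by
  simpa using AdjoinRoot.eval₂_root (Polynomial.X ^ N : Polynomial R)

/-- The homomorphism `R[y]/(y^N) → A` sending `y` to an element whose `N`-th power vanishes. -/
def truncatedLift {A : Type*} [CommRing A] [Algebra R A] (a : A) (ha : a ^ N = 0) :
    TruncatedPolynomial R N →ₐ[R] A :=
  AdjoinRoot.liftAlgHom _ (Algebra.ofId R A) a (by simpa using ha)

@[simp]
lemma truncatedLift_root {A : Type*} [CommRing A] [Algebra R A] (a : A) (ha : a ^ N = 0) :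
    truncatedLift (R := R) a ha (AdjoinRoot.root _) = a :=
  AdjoinRoot.liftAlgHom_root ..

/-- The automorphism `y ↦ c y` of `R[y]/(y^N)`. -/
def truncatedScale (c : Rˣ) : TruncatedPolynomial R N ≃ₐ[R] TruncatedPolynomial R N :=
  let scaleHom (u : R) : TruncatedPolynomial R N →ₐ[R] TruncatedPolynomial R N :=
    truncatedLift (u • AdjoinRoot.root _) (by
      rw [smul_pow, truncatedPolynomial_root_pow, smul_zero])
  AlgEquiv.ofAlgHom (scaleHom c) (scaleHom ↑c⁻¹)
    (AdjoinRoot.algHom_ext (by simp [scaleHom, smul_smul]))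
    (AdjoinRoot.algHom_ext (by simp [scaleHom, smul_smul]))

@[simp]
lemma truncatedScale_root (c : Rˣ) :
    truncatedScale c (AdjoinRoot.root _ : TruncatedPolynomial R N) =
      (c : R) • (AdjoinRoot.root _ : TruncatedPolynomial R N) := by
  simp [truncatedScale]

/-- The monomial basis `1, y, …, y^{N-1}` of `R[y]/(y^N)`. -/
def truncatedBasis [Nontrivial R] : Module.Basis (Fin N) R (TruncatedPolynomial R N) :=
  (AdjoinRoot.powerBasis' (Polynomial.monic_X_pow N)).basis.reindex
    (finCongr (Polynomial.natDegree_X_pow N))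

@[simp]
lemma truncatedBasis_apply [Nontrivial R] (j : Fin N) :
    (truncatedBasis j : TruncatedPolynomial R N) = AdjoinRoot.root _ ^ (j : ℕ) := by
  rw [truncatedBasis, Module.Basis.reindex_apply, PowerBasis.coe_basis]
  rfl

end TruncatedPolynomial

/-- The family `x² + xyⁿ + ε y^{2n}`, which contains `W` at `ε = 1` and `V` at `ε = 0`. -/
def loopChain (n : ℕ) (ε : ℂ) : MvPolynomial (Fin 2) ℂ :=
  X 0 ^ 2 + X 0 * X 1 ^ n + C ε * X 1 ^ (2 * n)

lemma W8_eq_loopChain (n : ℕ) : W8 n = loopChain n 1 := by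
  simp [W8, loopChain]

lemma V8_eq_loopChain (n : ℕ) : V8 n = loopChain n 0 := by
  simp [V8, loopChain]

section LoopChain

variable {n : ℕ} {ε δ : ℂ}

lemma isWeightedHomogeneous_X_one_pow (hn : n ≠ 0) :
    IsWeightedHomogeneous (q8 n) (X 1 ^ n : MvPolynomial (Fin 2) ℂ) (q8 n 0) := by
  convert (isWeightedHomogeneous_X ℂ (q8 n) 1).pow n using 1
  simp [q8, hn]

lemma isWeightedHomogeneous_loopChain (hn : n ≠ 0) :
    IsWeightedHomogeneous (q8 n) (loopChain n ε) 1 := by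
  have hx := isWeightedHomogeneous_X ℂ (q8 n) 0
  have hy := isWeightedHomogeneous_X_one_pow hn
  have hq : q8 n 0 + q8 n 0 = 1 := by norm_num [q8]
  rw [loopChain, two_mul, sq, pow_add, ← hq]
  exact ((hx.mul hx).add (hx.mul hy)).add ((hy.mul hy).C_mul ε)

lemma isQuasiHomogeneous_loopChain (hn : n ≠ 0) : IsQuasiHomogeneous (loopChain n ε) (q8 n) := by
  refine isQuasiHomogeneous_iff.2 ⟨?_, isWeightedHomogeneous_loopChain hn⟩
  have : 0 < (n : ℚ) := by positivity
  simp [Fin.forall_fin_two, q8, this]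

lemma pderiv_zero_loopChain : pderiv 0 (loopChain n ε) = (2 : ℂ) • X 0 + X 1 ^ n := by
  simp [loopChain, smul_eq_C_mul, map_ofNat C 2]

lemma pderiv_one_loopChain :
    pderiv 1 (loopChain n ε) =
      (n : ℂ) • (X 0 * X 1 ^ (n - 1)) + (2 * n * ε) • X 1 ^ (2 * n - 1) := by
  simp only [loopChain, map_add, Derivation.leibniz, Derivation.leibniz_pow, derivation_C,
    pderiv_X_self, pderiv_X_of_ne zero_ne_one, smul_eq_C_mul, C_mul, map_natCast, map_ofNat C 2,
    smul_eq_mul, nsmul_eq_mul, Nat.cast_mul, Nat.cast_ofNat]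
  ring

lemma pderiv_one_pderiv_one_loopChain :
    pderiv 1 (pderiv 1 (loopChain n ε)) =
      (n * (n - 1) : ℂ) • (X 0 * X 1 ^ (n - 2)) +
        (2 * n * (2 * n - 1) * ε) • X 1 ^ (2 * n - 2) := by
  obtain rfl | hn := eq_or_ne n 0
  · simp [pderiv_one_loopChain]
  have hcast : ((n - 1 : ℕ) : ℂ) = n - 1 := by
    rw [Nat.cast_pred (Nat.pos_of_ne_zero hn)]
  have hcast_two : ((2 * n - 1 : ℕ) : ℂ) = 2 * n - 1 := by
    rw [Nat.cast_pred (by omega)]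
    push_cast
    rfl
  simp only [pderiv_one_loopChain, map_add, Derivation.map_smul, Derivation.leibniz,
    Derivation.leibniz_pow, pderiv_X_self, pderiv_X_of_ne zero_ne_one, smul_eq_mul, mul_one,
    mul_zero, add_zero, Nat.sub_sub, ← Nat.cast_smul_eq_nsmul ℂ, hcast, hcast_two, mul_smul_comm]
  module

lemma hess_loopChain :
    hess (loopChain n ε) =
      (2 : ℂ) • ((n * (n - 1) : ℂ) • (X 0 * X 1 ^ (n - 2)) +
        (2 * n * (2 * n - 1) * ε) • X 1 ^ (2 * n - 2)) - ((n : ℂ) • X 1 ^ (n - 1)) ^ 2 := by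
  have hxx : pderiv 0 (pderiv 0 (loopChain n ε)) = C 2 := by
    simp [pderiv_zero_loopChain, smul_eq_C_mul]
  have hxy : pderiv 0 (pderiv 1 (loopChain n ε)) = (n : ℂ) • X 1 ^ (n - 1) := by
    simp [pderiv_one_loopChain]
  have hyx : pderiv 1 (pderiv 0 (loopChain n ε)) = (n : ℂ) • X 1 ^ (n - 1) := by
    simp [pderiv_zero_loopChain, smul_eq_C_mul]
  rw [hess, Matrix.det_fin_two]
  simp only [Matrix.of_apply, hxx, hxy, hyx, pderiv_one_pderiv_one_loopChain]
  rw [C_mul', sq]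

lemma mkQ_X_zero :
    mkQ (loopChain n ε) (X 0) = -(1 / 2 : ℂ) • mkQ (loopChain n ε) (X 1) ^ n := by
  have hrel : (2 : ℂ) • mkQ (loopChain n ε) (X 0) + mkQ (loopChain n ε) (X 1) ^ n = 0 := by
    simpa [pderiv_zero_loopChain] using mkQ_pderiv (W := loopChain n ε) 0
  rw [eq_neg_of_add_eq_zero_right hrel]
  module

lemma mkQ_loopChain_eq_aeval :
    mkQ (loopChain n ε) =
      aeval ![-(1 / 2 : ℂ) • mkQ (loopChain n ε) (X 1) ^ n, mkQ (loopChain n ε) (X 1)] := by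
  refine MvPolynomial.algHom_ext (Fin.forall_fin_two.2 ⟨?_, ?_⟩)
  · simpa using mkQ_X_zero
  · simp

section Elimination

variable {A : Type*} [CommRing A] [Algebra ℂ A] (y : A)

lemma aeval_pderiv_zero_loopChain :
    aeval ![-(1 / 2 : ℂ) • y ^ n, y] (pderiv 0 (loopChain n ε)) = 0 := by
  simp [pderiv_zero_loopChain, smul_smul]

lemma aeval_pderiv_one_loopChain :
    aeval ![-(1 / 2 : ℂ) • y ^ n, y] (pderiv 1 (loopChain n ε)) =
      (n / 2 * (4 * ε - 1)) • y ^ (2 * n - 1) := by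
  have hpow : y ^ n * y ^ (n - 1) = y ^ (2 * n - 1) := by
    rw [← pow_add, (by omega : n + (n - 1) = 2 * n - 1)]
  simp only [pderiv_one_loopChain, map_add, map_smul, map_mul, map_pow, aeval_X,
    Matrix.cons_val_zero, Matrix.cons_val_one, smul_mul_assoc, hpow]
  module

lemma aeval_hess_loopChain :
    aeval ![-(1 / 2 : ℂ) • y ^ n, y] (hess (loopChain n ε)) =
      (n * (2 * n - 1) * (4 * ε - 1)) • y ^ (2 * n - 2) := by
  have hxy : (n * (n - 1) : ℂ) • (y ^ n * y ^ (n - 2)) = (n * (n - 1) : ℂ) • y ^ (2 * n - 2) := by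
    obtain rfl | rfl | hn : n = 0 ∨ n = 1 ∨ 2 ≤ n := by omega
    · simp
    · simp
    · rw [← pow_add, (by omega : n + (n - 2) = 2 * n - 2)]
  have hsq : (y ^ (n - 1)) ^ 2 = y ^ (2 * n - 2) := by
    rw [← pow_mul, (by omega : (n - 1) * 2 = 2 * n - 2)]
  simp only [hess_loopChain, map_add, map_sub, map_smul, map_mul, map_pow, aeval_X,
    Matrix.cons_val_zero, Matrix.cons_val_one, smul_mul_assoc, smul_pow,
    smul_comm _ (-(1 / 2) : ℂ), hxy, hsq]
  module

end Elimination

lemma mkQ_X_one_pow_eq_zero (hn : n ≠ 0) (hε : 4 * ε ≠ 1) :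
    mkQ (loopChain n ε) (X 1) ^ (2 * n - 1) = 0 := by
  have hrel := mkQ_pderiv (W := loopChain n ε) 1
  rw [mkQ_loopChain_eq_aeval, aeval_pderiv_one_loopChain] at hrel
  refine (smul_eq_zero.1 hrel).resolve_left ?_
  simp [hn, sub_ne_zero, hε]

lemma mkQ_hess_loopChain :
    mkQ (loopChain n ε) (hess (loopChain n ε)) =
      (n * (2 * n - 1) * (4 * ε - 1)) • mkQ (loopChain n ε) (X 1) ^ (2 * n - 2) := by
  conv_lhs => rw [mkQ_loopChain_eq_aeval, aeval_hess_loopChain]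

/-- The identification `Q ≃ ℂ[y]/(y^{2n-1})` of the Milnor ring of `x² + xyⁿ + ε y^{2n}`, obtained
by eliminating `x`. -/
def loopChainEquiv (hn : n ≠ 0) (hε : 4 * ε ≠ 1) :
    MilnorRing (loopChain n ε) ≃ₐ[ℂ] TruncatedPolynomial ℂ (2 * n - 1) :=
  AlgEquiv.ofAlgHom
    (milnorRingLift ![-(1 / 2 : ℂ) • AdjoinRoot.root _ ^ n, AdjoinRoot.root _]
      (Fin.forall_fin_two.2 ⟨aeval_pderiv_zero_loopChain _, by
        rw [aeval_pderiv_one_loopChain, truncatedPolynomial_root_pow, smul_zero]⟩))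
    (truncatedLift (mkQ (loopChain n ε) (X 1)) (mkQ_X_one_pow_eq_zero hn hε))
    (AdjoinRoot.algHom_ext (by simp))
    (milnorRing_algHom_ext (Fin.forall_fin_two.2 ⟨by simp [mkQ_X_zero], by simp⟩))

@[simp]
lemma loopChainEquiv_X_one (hn : n ≠ 0) (hε : 4 * ε ≠ 1) :
    loopChainEquiv hn hε (mkQ _ (X 1)) = AdjoinRoot.root _ := by
  simp [loopChainEquiv]

@[simp]
lemma loopChainEquiv_symm_root (hn : n ≠ 0) (hε : 4 * ε ≠ 1) :
    (loopChainEquiv hn hε).symm (AdjoinRoot.root _) = mkQ _ (X 1) := by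
  rw [AlgEquiv.symm_apply_eq, loopChainEquiv_X_one]

/-- The monomial basis `1, y, …, y^{2n-2}` of the Milnor ring of `x² + xyⁿ + ε y^{2n}`. -/
def loopChainBasis (hn : n ≠ 0) (hε : 4 * ε ≠ 1) :
    Module.Basis (Fin (2 * n - 1)) ℂ (MilnorRing (loopChain n ε)) :=
  truncatedBasis.map (loopChainEquiv hn hε).symm.toLinearEquiv

lemma coe_loopChainBasis (hn : n ≠ 0) (hε : 4 * ε ≠ 1) :
    ⇑(loopChainBasis hn hε) = fun j : Fin (2 * n - 1) => mkQ (loopChain n ε) (X 1 ^ (j : ℕ)) := by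
  ext j
  simp [loopChainBasis]

lemma mkQ_hess_loopChain_ne_zero (hn : n ≠ 0) (hε : 4 * ε ≠ 1) :
    mkQ (loopChain n ε) (hess (loopChain n ε)) ≠ 0 := by
  have hy : mkQ (loopChain n ε) (X 1) ^ (2 * n - 2) ≠ 0 := by
    simpa [coe_loopChainBasis] using (loopChainBasis hn hε).ne_zero ⟨2 * n - 2, by omega⟩
  have hodd : (2 * n - 1 : ℂ) ≠ 0 := by
    rw [sub_ne_zero]
    exact_mod_cast (by omega : 2 * n ≠ 1)
  rw [mkQ_hess_loopChain]
  exact smul_ne_zero (by simp [hn, hodd, sub_ne_zero, hε]) hy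

/-- The isomorphism `φ_c` between the Milnor rings of two members of the family, given by
`y ↦ c y`. -/
def scaleEquiv (hn : n ≠ 0) (hε : 4 * ε ≠ 1) (hδ : 4 * δ ≠ 1) (c : ℂˣ) :
    MilnorRing (loopChain n ε) ≃ₐ[ℂ] MilnorRing (loopChain n δ) :=
  ((loopChainEquiv hn hε).trans (truncatedScale c)).trans (loopChainEquiv hn hδ).symm

variable (hn : n ≠ 0) (hε : 4 * ε ≠ 1) (hδ : 4 * δ ≠ 1) (c : ℂˣ)

lemma scaleEquiv_X_one :
    scaleEquiv hn hε hδ c (mkQ _ (X 1)) = (c : ℂ) • mkQ _ (X 1) := by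
  simp [scaleEquiv]

lemma scaleEquiv_X_zero :
    scaleEquiv hn hε hδ c (mkQ _ (X 0)) = -((c : ℂ) ^ n / 2) • mkQ _ (X 1 ^ n) := by
  rw [mkQ_X_zero, map_smul, map_pow, scaleEquiv_X_one, smul_pow, smul_smul, map_pow]
  ring_nf

lemma preservesGrading_scaleEquiv :
    PreservesGrading (scaleEquiv hn hε hδ c) (q8 n) (q8 n) := by
  refine preservesGrading_of_map_X_mem (φ := (scaleEquiv hn hε hδ c).toAlgHom)
    (Fin.forall_fin_two.2 ⟨?_, ?_⟩)
  · exact (scaleEquiv_X_zero hn hε hδ c).symm ▸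
      Submodule.smul_mem _ _ (mkQ_mem_gradedPiece (isWeightedHomogeneous_X_one_pow hn))
  · exact (scaleEquiv_X_one hn hε hδ c).symm ▸
      Submodule.smul_mem _ _ (mkQ_mem_gradedPiece (isWeightedHomogeneous_X ℂ (q8 n) 1))

lemma preservesPairings_scaleEquiv (hc : (c : ℂ) ^ (2 * n - 2) * (4 * ε - 1) = 4 * δ - 1) :
    PreservesPairings (scaleEquiv hn hε hδ c) (q8 n) (q8 n) := by
  have : Module.Finite ℂ (MilnorRing (loopChain n δ)) := .of_basis (loopChainBasis hn hδ)
  have hhess : scaleEquiv hn hε hδ c (mkQ _ (hess (loopChain n ε))) =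
      mkQ _ (hess (loopChain n δ)) := by
    rw [mkQ_hess_loopChain, mkQ_hess_loopChain, map_smul, map_pow, scaleEquiv_X_one,
      smul_pow, smul_smul, ← hc]
    ring_nf
  exact preservesPairings_of_map_hess (preservesGrading_scaleEquiv hn hε hδ c) rfl
    (isWeightedHomogeneous_loopChain hn) hhess (mkQ_hess_loopChain_ne_zero hn hδ)

end LoopChain

end LG

theorem example_loop_chain_general (n : ℕ) (hn : 2 ≤ n) {ε δ : ℂ} (hε : 4 * ε ≠ 1)
    (hδ : 4 * δ ≠ 1) :
    IsQuasiHomogeneous (loopChain n ε) (q8 n) ∧ IsQuasiHomogeneous (loopChain n δ) (q8 n) ∧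
    (LinearIndependent ℂ (fun j : Fin (2 * n - 1) => mkQ (loopChain n ε) (X 1 ^ (j : ℕ))) ∧
      Submodule.span ℂ
        (Set.range fun j : Fin (2 * n - 1) => mkQ (loopChain n ε) (X 1 ^ (j : ℕ))) = ⊤) ∧
    (LinearIndependent ℂ (fun j : Fin (2 * n - 1) => mkQ (loopChain n δ) (X 1 ^ (j : ℕ))) ∧
      Submodule.span ℂ
        (Set.range fun j : Fin (2 * n - 1) => mkQ (loopChain n δ) (X 1 ^ (j : ℕ))) = ⊤) ∧
    (∀ c : ℂ, c ≠ 0 → ∃ φ : MilnorRing (loopChain n ε) ≃ₐ[ℂ] MilnorRing (loopChain n δ),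
      φ (mkQ (loopChain n ε) (X 0)) = -(c ^ n / 2) • mkQ (loopChain n δ) (X 1 ^ n) ∧
      φ (mkQ (loopChain n ε) (X 1)) = c • mkQ (loopChain n δ) (X 1) ∧
      PreservesGrading ⇑φ (q8 n) (q8 n)) ∧
    (∃ c : ℂ, c ≠ 0 ∧ ∃ φ : MilnorRing (loopChain n ε) ≃ₐ[ℂ] MilnorRing (loopChain n δ),
      φ (mkQ (loopChain n ε) (X 0)) = -(c ^ n / 2) • mkQ (loopChain n δ) (X 1 ^ n) ∧
      φ (mkQ (loopChain n ε) (X 1)) = c • mkQ (loopChain n δ) (X 1) ∧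
      PreservesGrading ⇑φ (q8 n) (q8 n) ∧ PreservesPairings ⇑φ (q8 n) (q8 n)) := by
  have hn0 : n ≠ 0 := by omega
  have hbasis {η : ℂ} (hη : 4 * η ≠ 1) := coe_loopChainBasis hn0 hη
  refine ⟨isQuasiHomogeneous_loopChain hn0, isQuasiHomogeneous_loopChain hn0,
    hbasis hε ▸ ⟨(loopChainBasis hn0 hε).linearIndependent, (loopChainBasis hn0 hε).span_eq⟩,
    hbasis hδ ▸ ⟨(loopChainBasis hn0 hδ).linearIndependent, (loopChainBasis hn0 hδ).span_eq⟩,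
    fun c hc => ?_, ?_⟩
  · lift c to ℂˣ using hc.isUnit
    exact ⟨scaleEquiv hn0 hε hδ c, scaleEquiv_X_zero _ _ _ _, scaleEquiv_X_one _ _ _ _,
      preservesGrading_scaleEquiv _ _ _ _⟩
  · obtain ⟨c, hc⟩ := IsAlgClosed.exists_pow_nat_eq ((4 * δ - 1) / (4 * ε - 1))
      (by omega : 0 < 2 * n - 2)
    have hc0 : c ≠ 0 := by
      rintro rfl
      rw [zero_pow (by omega), eq_comm] at hc
      exact div_ne_zero (sub_ne_zero.2 hδ) (sub_ne_zero.2 hε) hc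
    rw [eq_div_iff (sub_ne_zero.2 hε)] at hc
    lift c to ℂˣ using hc0.isUnit
    exact ⟨c, hc0, scaleEquiv hn0 hε hδ c, scaleEquiv_X_zero _ _ _ _, scaleEquiv_X_one _ _ _ _,
      preservesGrading_scaleEquiv _ _ _ _, preservesPairings_scaleEquiv _ _ _ _ hc⟩

set_option maxHeartbeats 1000000 in
/-- for `W = x² + xyⁿ + y^{2n}` and `V = x² + xyⁿ` (`n ≥ 2`), both
with weights `(1/2, 1/(2n))` and monomial basis `{1, y, …, y^{2n-2}}` of the
Milnor ring, each nonzero `c ∈ ℂ` yields a graded algebra isomorphism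
`φ_c : Q_W ≃ Q_V` with `y ↦ c·[y]` and `x ↦ -cⁿ[yⁿ]/2`, and for some nonzero
`c` the isomorphism `φ_c` also preserves the pairings. -/
theorem example_loop_chain (n : ℕ) (hn : 2 ≤ n) :
    IsQuasiHomogeneous (W8 n) (q8 n) ∧ IsQuasiHomogeneous (V8 n) (q8 n) ∧
    (LinearIndependent ℂ (fun j : Fin (2 * n - 1) => mkQ (W8 n) (X 1 ^ (j : ℕ))) ∧
      Submodule.span ℂ
        (Set.range fun j : Fin (2 * n - 1) => mkQ (W8 n) (X 1 ^ (j : ℕ))) = ⊤) ∧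
    (LinearIndependent ℂ (fun j : Fin (2 * n - 1) => mkQ (V8 n) (X 1 ^ (j : ℕ))) ∧
      Submodule.span ℂ
        (Set.range fun j : Fin (2 * n - 1) => mkQ (V8 n) (X 1 ^ (j : ℕ))) = ⊤) ∧
    (∀ c : ℂ, c ≠ 0 → ∃ φ : MilnorRing (W8 n) ≃ₐ[ℂ] MilnorRing (V8 n),
      φ (mkQ (W8 n) (X 0)) = -(c ^ n / 2) • mkQ (V8 n) (X 1 ^ n) ∧
      φ (mkQ (W8 n) (X 1)) = c • mkQ (V8 n) (X 1) ∧
      PreservesGrading ⇑φ (q8 n) (q8 n)) ∧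
    (∃ c : ℂ, c ≠ 0 ∧ ∃ φ : MilnorRing (W8 n) ≃ₐ[ℂ] MilnorRing (V8 n),
      φ (mkQ (W8 n) (X 0)) = -(c ^ n / 2) • mkQ (V8 n) (X 1 ^ n) ∧
      φ (mkQ (W8 n) (X 1)) = c • mkQ (V8 n) (X 1) ∧
      PreservesGrading ⇑φ (q8 n) (q8 n) ∧ PreservesPairings ⇑φ (q8 n) (q8 n)) := by
  rw [W8_eq_loopChain, V8_eq_loopChain]
  exact example_loop_chain_general n hn (by norm_num) (by norm_num)
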